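/- Let u be a nonzero vector in E_tW and v a nonzero vector in E*_rW. Then for 0 ≤ i ≤ d, ‖E*_{r+i}u‖² = ‖u‖²·k_i(W)/ν(W) and ‖E_{t+i}v‖² = ‖v‖²·k*_i(W)/ν(W). -/

import Mathlib

open Matrix
open scoped Classical

noncomputable section

/-- The full setup: a `Q`-polynomial distance-regular graph `Γ = (X,R)` of diameter `D ≥ 3`,
with adjacency matrix `A`, primitive idempotents `E_i`, eigenvalues `θ_i`,
Krein parameters `q^h_{ij}`, a fixed base vertex `x`, dual primitive idempotents `E*_i`,
dual adjacency matrix `A*` and dual eigenvalues `θ*_i`. -/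
structure TSetup (X : Type*) [Fintype X] [DecidableEq X] where
  G : SimpleGraph X
  hGconn : G.Connected
  D : ℕ
  hD3 : 3 ≤ D
  hDiamLe : ∀ y z : X, G.dist y z ≤ D
  hDiamEq : ∃ y z : X, G.dist y z = D
  p : ℕ → ℕ → ℕ → ℕ
  hDRG : ∀ h i j : ℕ, h ≤ D → i ≤ D → j ≤ D → ∀ y z : X, G.dist y z = h →
    Nat.card {w : X // G.dist y w = i ∧ G.dist z w = j} = p h i j
  A : Matrix X X ℂ
  hA : ∀ y z : X, A y z = if G.Adj y z then 1 else 0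
  E : ℕ → Matrix X X ℂ
  hEzero : ∀ i : ℕ, D < i → E i = 0
  hEsum : ∑ i ∈ Finset.range (D + 1), E i = 1
  hEidem : ∀ i j : ℕ, i ≤ D → j ≤ D → E i * E j = if i = j then E i else 0
  hEsymm : ∀ i : ℕ, (E i)ᵀ = E i
  hEreal : ∀ i : ℕ, (E i).map (starRingEnd ℂ) = E i
  hE0 : E 0 = (Fintype.card X : ℂ)⁻¹ • Matrix.of (fun _ _ => (1 : ℂ))
  θ : ℕ → ℝ
  hθinj : ∀ i j : ℕ, i ≤ D → j ≤ D → θ i = θ j → i = j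
  hAspec : A = ∑ i ∈ Finset.range (D + 1), (θ i : ℂ) • E i
  q : ℕ → ℕ → ℕ → ℝ
  hKrein : ∀ i j : ℕ, i ≤ D → j ≤ D →
    Matrix.hadamard (E i) (E j) =
      (Fintype.card X : ℂ)⁻¹ • ∑ h ∈ Finset.range (D + 1), (q h i j : ℂ) • E h
  hQpoly0 : ∀ h i j : ℕ, h ≤ D → i ≤ D → j ≤ D →
    (i + j < h ∨ h + j < i ∨ h + i < j) → q h i j = 0
  hQpoly1 : ∀ h i j : ℕ, h ≤ D → i ≤ D → j ≤ D →
    (h = i + j ∨ i = h + j ∨ j = h + i) → q h i j ≠ 0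
  x : X
  Estar : ℕ → Matrix X X ℂ
  hEstarzero : ∀ i : ℕ, D < i → Estar i = 0
  hEstar : ∀ i : ℕ, i ≤ D → ∀ y z : X,
    Estar i y z = if y = z ∧ G.dist x y = i then 1 else 0
  Astar : Matrix X X ℂ
  hAstar : ∀ y z : X, Astar y z = if y = z then (Fintype.card X : ℂ) * E 1 x y else 0
  θstar : ℕ → ℝ
  hθstarinj : ∀ i j : ℕ, i ≤ D → j ≤ D → θstar i = θstar j → i = j
  hAstarspec : Astar = ∑ i ∈ Finset.range (D + 1), (θstar i : ℂ) • Estar i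

variable {X : Type*} [Fintype X] [DecidableEq X]

/-- The Terwilliger algebra `T = T(x)`, generated by `A` and `A*`. -/
def TSetup.T (S : TSetup X) : Subalgebra ℂ (Matrix X X ℂ) :=
  Algebra.adjoin ℂ {S.A, S.Astar}

/-- A thin irreducible `T`-module `W` with endpoint `r`, dual endpoint `t` and diameter `d`,
where `E*_i W ≠ 0` iff `r ≤ i ≤ r + d` and `E_i W ≠ 0` iff `t ≤ i ≤ t + d`. -/
structure TMod (S : TSetup X) where
  W : Submodule ℂ (X → ℂ)
  hWinv : ∀ B ∈ S.T, ∀ w ∈ W, B *ᵥ w ∈ W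
  hWne : W ≠ ⊥
  hWirr : ∀ U : Submodule ℂ (X → ℂ), U ≤ W →
    (∀ B ∈ S.T, ∀ w ∈ U, B *ᵥ w ∈ U) → U = ⊥ ∨ U = W
  hthin : ∀ i : ℕ, Module.finrank ℂ (W.map (S.Estar i).mulVecLin) ≤ 1
  r : ℕ
  t : ℕ
  d : ℕ
  hr : ∀ i : ℕ, W.map (S.Estar i).mulVecLin ≠ ⊥ ↔ r ≤ i ∧ i ≤ r + d
  ht : ∀ i : ℕ, W.map (S.E i).mulVecLin ≠ ⊥ ↔ t ≤ i ∧ i ≤ t + d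

open Classical in
/-- The action of a matrix `B` on `W` (the restriction of `B` to `W`; defined to be `0`
if `B` does not leave `W` invariant). -/
def actW (S : TSetup X) (M : TMod S) (B : Matrix X X ℂ) : M.W →ₗ[ℂ] M.W :=
  if h : ∀ w ∈ M.W, B.mulVecLin w ∈ M.W then B.mulVecLin.restrict h else 0

/-- `tr_W(B)`: the trace of the action of `B` on `W`. -/
def trW (S : TSetup X) (M : TMod S) (B : Matrix X X ℂ) : ℂ :=
  LinearMap.trace ℂ M.W (actW S M B)

/-- `a_i(W) = tr_W(E*_{r+i} A)`. -/
def aW (S : TSetup X) (M : TMod S) (i : ℕ) : ℂ :=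
  trW S M (S.Estar (M.r + i) * S.A)

/-- `x_i(W) = tr_W(E*_{r+i} A E*_{r+i-1} A)`, with `x_0(W) = 0`. -/
def xW (S : TSetup X) (M : TMod S) (i : ℕ) : ℂ :=
  if i = 0 then 0 else trW S M (S.Estar (M.r + i) * S.A * S.Estar (M.r + i - 1) * S.A)

/-- `a*_i(W) = tr_W(E_{t+i} A*)`. -/
def astarW (S : TSetup X) (M : TMod S) (i : ℕ) : ℂ :=
  trW S M (S.E (M.t + i) * S.Astar)

/-- `x*_i(W) = tr_W(E_{t+i} A* E_{t+i-1} A*)`, with `x*_0(W) = 0`. -/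
def xstarW (S : TSetup X) (M : TMod S) (i : ℕ) : ℂ :=
  if i = 0 then 0 else trW S M (S.E (M.t + i) * S.Astar * S.E (M.t + i - 1) * S.Astar)

/-- The polynomials `p_i`: `p_0 = 1`, `p_{-1} = 0`,
`λ p_i = p_{i+1} + a_i(W) p_i + x_i(W) p_{i-1}`. -/
def pW (S : TSetup X) (M : TMod S) : ℕ → Polynomial ℂ
  | 0 => 1
  | 1 => Polynomial.X - Polynomial.C (aW S M 0)
  | (n + 2) =>
      (Polynomial.X - Polynomial.C (aW S M (n + 1))) * pW S M (n + 1)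
        - Polynomial.C (xW S M (n + 1)) * pW S M n

/-- The polynomials `p*_i`: `p*_0 = 1`, `p*_{-1} = 0`,
`λ p*_i = p*_{i+1} + a*_i(W) p*_i + x*_i(W) p*_{i-1}`. -/
def pstarW (S : TSetup X) (M : TMod S) : ℕ → Polynomial ℂ
  | 0 => 1
  | 1 => Polynomial.X - Polynomial.C (astarW S M 0)
  | (n + 2) =>
      (Polynomial.X - Polynomial.C (astarW S M (n + 1))) * pstarW S M (n + 1)
        - Polynomial.C (xstarW S M (n + 1)) * pstarW S M n

/-- The Hermitian inner product `⟨u,v⟩ = Σ_y u_y conj(v_y)` on `ℂ^X`. -/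
def herm (u v : X → ℂ) : ℂ := ∑ y, u y * (starRingEnd ℂ) (v y)

/-- `ν(W)`, the multiplicative inverse of `m_0(W) = tr_W(E_t E*_r)`. -/
def nuW (S : TSetup X) (M : TMod S) : ℂ :=
  (trW S M (S.E M.t * S.Estar M.r))⁻¹

/-- `k_i(W) = ν(W) m*_i(W)` where `m*_i(W) = tr_W(E*_{r+i} E_t)`. -/
def kW (S : TSetup X) (M : TMod S) (i : ℕ) : ℂ :=
  nuW S M * trW S M (S.Estar (M.r + i) * S.E M.t)

/-- `k*_i(W) = ν(W) m_i(W)` where `m_i(W) = tr_W(E_{t+i} E*_r)`. -/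
def kstarW (S : TSetup X) (M : TMod S) (i : ℕ) : ℂ :=
  nuW S M * trW S M (S.E (M.t + i) * S.Estar M.r)

/-!
If `P` is a self-adjoint idempotent of rank at most one, `Q` is a self-adjoint idempotent and
`u = P u`, then `P Q u = tr(Q P) u`, so `⟨Q u, Q u⟩ = ⟨P Q u, u⟩ = tr(Q P) ⟨u, u⟩`. Both norm
formulas are instances of this, once `E_t` has rank at most one on `W` and `tr(E_t E*_r) ≠ 0`.

These two facts come from the flag `E*_r W + ⋯ + E*_{r+n} W`. Each of its steps adds at most one
dimension and `A` moves it up by at most one step, so either `A` fills the next step or the current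
member is invariant under both `A` and `A*`, hence equal to `W`. Therefore an `A`-invariant subspace
of `W` containing `E*_r W` is all of `W`. The preimage of `E_i E*_r W` under `E_i` is such a
subspace, and so `E_i W = E_i E*_r W`: it is at most a line, and `E_t` does not vanish on `E*_r W`.
-/

section LinearAlgebra

variable {K V : Type*} [Field K] [AddCommGroup V] [Module K V]

theorem isPrincipal_of_finrank_map_subtype_le_one [FiniteDimensional K V] {W : Submodule K V}
    {U : Submodule K W} (h : Module.finrank K (U.map W.subtype) ≤ 1) : U.IsPrincipal := by
  rwa [← Submodule.finrank_le_one_iff_isPrincipal, ← Submodule.finrank_map_subtype_eq]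

theorem apply_eq_trace_smul [FiniteDimensional K V] {f : Module.End K V} {U : Submodule K V}
    (hU : U.IsPrincipal) (hf : LinearMap.range f ≤ U) {u : V} (hu : u ∈ U) :
    f u = LinearMap.trace K V f • u := by
  obtain ⟨g, rfl⟩ := hU
  by_cases hg : g = 0
  · obtain rfl : u = 0 := by simpa [hg] using hu
    simp
  · let e := LinearEquiv.toSpanNonzeroSingleton K V g hg
    let φ : V →ₗ[K] K := e.symm ∘ₗ f.codRestrict (K ∙ g) fun w => hf ⟨w, rfl⟩
    have hφ : f = φ.smulRight g := LinearMap.ext fun w =>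
      (congrArg Subtype.val (e.apply_symm_apply ⟨f w, hf ⟨w, rfl⟩⟩)).symm
    obtain ⟨a, rfl⟩ := Submodule.mem_span_singleton.mp hu
    rw [map_smul, smul_comm, hφ, LinearMap.trace_smulRight, LinearMap.smulRight_apply]

theorem sesq_apply_self_eq_mul_trace [FiniteDimensional K V] {σ : K →+* K}
    {B : V →ₗ[K] V →ₛₗ[σ] K} {P Q : Module.End K V}
    (hP : IsIdempotentElem P) (hPB : B.IsSelfAdjoint P) (hP1 : (LinearMap.range P).IsPrincipal)
    (hQ : IsIdempotentElem Q) (hQB : B.IsSelfAdjoint Q) {u : V} (hu : u ∈ LinearMap.range P) :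
    B (Q u) (Q u) = B u u * LinearMap.trace K V (Q * P) := by
  have hPu : P u = u := (LinearMap.IsIdempotentElem.mem_range_iff hP).mp hu
  have hPQu : P (Q u) = LinearMap.trace K V (Q * P) • u := by
    rw [LinearMap.trace_mul_comm]
    exact apply_eq_trace_smul hP1 (LinearMap.range_comp_le_range Q P) hu
  calc B (Q u) (Q u) = B ((Q * Q) u) u := (hQB (Q u) u).symm
    _ = B (Q u) (P u) := by rw [hQ.eq, hPu]
    _ = B (P (Q u)) u := (hPB (Q u) u).symm
    _ = B u u * LinearMap.trace K V (Q * P) := by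
      rw [hPQu, map_smul, LinearMap.smul_apply, smul_eq_mul, mul_comm]

theorem aeval_sum_smul {R ι : Type*} [Ring R] [Algebra K R] [Fintype ι] {e : ι → R}
    (he : CompleteOrthogonalIdempotents e) (θ : ι → K) (p : Polynomial K) :
    Polynomial.aeval (∑ i, θ i • e i) p = ∑ i, p.eval (θ i) • e i := by
  induction p using Polynomial.induction_on with
  | C a => simp [← Finset.smul_sum, he.complete, Algebra.algebraMap_eq_smul_one]
  | add p q hp hq => simp [hp, hq, add_smul, Finset.sum_add_distrib]
  | monomial n a ih =>
    rw [pow_succ, ← mul_assoc, map_mul, ih, Polynomial.aeval_X]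
    simp only [Finset.sum_mul_sum, smul_mul_smul_comm, he.mul_eq, smul_ite, smul_zero,
      Finset.sum_ite_eq, Finset.mem_univ, if_true, Polynomial.eval_mul, Polynomial.eval_X]

theorem mem_adjoin_sum_smul {R ι : Type*} [Ring R] [Algebra K R] [Fintype ι] {e : ι → R}
    (he : CompleteOrthogonalIdempotents e) {θ : ι → K} (hθ : Function.Injective θ) (i : ι) :
    e i ∈ Algebra.adjoin K {∑ j, θ j • e j} := by
  obtain ⟨p, hp⟩ : ∃ p : Polynomial K, ∀ j, p.eval (θ j) = Pi.single (M := fun _ => K) i 1 j :=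
    (Polynomial.exists_eval_eq_iff θ _).mpr fun j k h => by rw [hθ h]
  have : Polynomial.aeval (∑ j, θ j • e j) p = e i := by
    simp [aeval_sum_smul he, hp, Pi.single_apply]
  exact this ▸ Polynomial.aeval_mem_adjoin_singleton K _

end LinearAlgebra

/-- A one-sided weakening of the notion of a thin Hessenberg (or Leonard) system on `V`: linear maps
`A`, `A*` acting irreducibly on `V`, with families `E_i`, `E*_i` of idempotents attached to their
eigenvalues, such that the `E*_i` with `i ≤ d` sum to the identity, have rank at most one, and `A`
raises their index by at most one. Nothing is asked of the action of `A*` on the `E_i`. Both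
families are indexed from `0`, whatever the endpoints of the module they come from. -/
structure ThinHessenbergSystem (K V : Type*) [Field K] [AddCommGroup V] [Module K V] where
  A : Module.End K V
  Astar : Module.End K V
  E : ℕ → Module.End K V
  Estar : ℕ → Module.End K V
  θ : ℕ → K
  θstar : ℕ → K
  d : ℕ
  isIdempotentElem_E : ∀ i, IsIdempotentElem (E i)
  isIdempotentElem_Estar : ∀ i, IsIdempotentElem (Estar i)
  E_mul_A : ∀ i, E i * A = θ i • E i
  Astar_mul_Estar : ∀ i, Astar * Estar i = θstar i • Estar i
  E_zero_ne_zero : E 0 ≠ 0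
  Estar_zero_ne_zero : Estar 0 ≠ 0
  sum_Estar : ∑ i ∈ Finset.range (d + 1), Estar i = 1
  isPrincipal_range_Estar : ∀ i, (LinearMap.range (Estar i)).IsPrincipal
  Estar_mul_A_mul_Estar : ∀ i j, i + 1 < j → Estar j * A * Estar i = 0
  irreducible : ∀ U ∈ A.invtSubmodule, U ∈ Astar.invtSubmodule → U = ⊥ ∨ U = ⊤

namespace ThinHessenbergSystem

variable {K V : Type*} [Field K] [AddCommGroup V] [Module K V] (Φ : ThinHessenbergSystem K V)

/-- The scalar `ν = tr(E_0 E*_0)⁻¹`. -/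
def ν : K := (LinearMap.trace K V (Φ.E 0 * Φ.Estar 0))⁻¹

/-- The scalars `k_i = ν tr(E*_i E_0)`. -/
def k (i : ℕ) : K := Φ.ν * LinearMap.trace K V (Φ.Estar i * Φ.E 0)

/-- The scalars `k*_i = ν tr(E_i E*_0)`. -/
def kstar (i : ℕ) : K := Φ.ν * LinearMap.trace K V (Φ.E i * Φ.Estar 0)

/-- The flag `E*_0 V ≤ E*_0 V + E*_1 V ≤ ⋯`, along which `A` moves up by at most one step. -/
def flag : ℕ →o Submodule K V := partialSups fun i => LinearMap.range (Φ.Estar i)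

theorem range_Estar_le_flag {i n : ℕ} (h : i ≤ n) : LinearMap.range (Φ.Estar i) ≤ Φ.flag n :=
  le_partialSups_of_le (fun i => LinearMap.range (Φ.Estar i)) h

theorem flag_le_iff {n : ℕ} {U : Submodule K V} :
    Φ.flag n ≤ U ↔ ∀ i ≤ n, LinearMap.range (Φ.Estar i) ≤ U :=
  partialSups_le_iff

theorem flag_ne_bot (n : ℕ) : Φ.flag n ≠ ⊥ := fun h =>
  Φ.Estar_zero_ne_zero <| LinearMap.range_eq_bot.mp <|
    le_bot_iff.mp <| h ▸ Φ.range_Estar_le_flag n.zero_le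

theorem flag_d_eq_top : Φ.flag Φ.d = ⊤ := by
  refine eq_top_iff.mpr fun w _ => ?_
  have hw : ∑ i ∈ Finset.range (Φ.d + 1), Φ.Estar i w = w := by
    rw [← LinearMap.sum_apply, Φ.sum_Estar, Module.End.one_apply]
  rw [← hw]
  exact Submodule.sum_mem _ fun i hi =>
    Φ.range_Estar_le_flag (Finset.mem_range_succ_iff.mp hi) ⟨w, rfl⟩

theorem flag_wcovBy_succ (n : ℕ) : Φ.flag n ⩿ Φ.flag (n + 1) := by
  obtain ⟨g, hg⟩ := Φ.isPrincipal_range_Estar (n + 1)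
  have : Φ.flag (n + 1) = K ∙ g ⊔ Φ.flag n := by
    rw [← hg, sup_comm]
    exact partialSups_add_one _ n
  rw [this]
  exact Submodule.wcovBy_span_singleton_sup g (Φ.flag n)

theorem map_A_flag_le (n : ℕ) : (Φ.flag n).map Φ.A ≤ Φ.flag (n + 1) := by
  rw [Submodule.map_le_iff_le_comap, flag_le_iff]
  rintro i hi _ ⟨w, rfl⟩
  have hw : ∑ j ∈ Finset.range (Φ.d + 1), (Φ.Estar j * Φ.A * Φ.Estar i) w
      = Φ.A (Φ.Estar i w) := by
    simp_rw [mul_assoc]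
    rw [← LinearMap.sum_apply, ← Finset.sum_mul, Φ.sum_Estar, one_mul, Module.End.mul_apply]
  rw [Submodule.mem_comap, ← hw]
  refine Submodule.sum_mem _ fun j _ => ?_
  rcases lt_or_ge (i + 1) j with hj | hj
  · rw [Φ.Estar_mul_A_mul_Estar i j hj]
    exact Submodule.zero_mem _
  · exact Φ.range_Estar_le_flag (hj.trans (by lia)) ⟨Φ.A (Φ.Estar i w), rfl⟩

theorem flag_mem_invtSubmodule_Astar (n : ℕ) : Φ.flag n ∈ Φ.Astar.invtSubmodule := by
  rw [Module.End.mem_invtSubmodule, flag_le_iff]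
  rintro i hi _ ⟨w, rfl⟩
  have hw : Φ.Astar (Φ.Estar i w) = Φ.θstar i • Φ.Estar i w :=
    LinearMap.congr_fun (Φ.Astar_mul_Estar i) w
  rw [Submodule.mem_comap, hw]
  exact Submodule.smul_mem _ _ (Φ.range_Estar_le_flag hi ⟨w, rfl⟩)

theorem flag_succ_le {n : ℕ} {U : Submodule K V} (hU : U ∈ Φ.A.invtSubmodule)
    (hn : Φ.flag n ≤ U) : Φ.flag (n + 1) ≤ U := by
  have hmap : Φ.flag n ⊔ (Φ.flag n).map Φ.A ≤ U :=
    sup_le hn ((Submodule.map_mono hn).trans (Submodule.map_le_iff_le_comap.mpr hU))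
  rcases (Φ.flag_wcovBy_succ n).eq_or_eq le_sup_left
    (sup_le (Φ.flag.monotone n.le_succ) (Φ.map_A_flag_le n)) with h | h
  · have hA : Φ.flag n ∈ Φ.A.invtSubmodule :=
      Submodule.map_le_iff_le_comap.mp (sup_eq_left.mp h)
    have htop : Φ.flag n = ⊤ :=
      (Φ.irreducible _ hA (Φ.flag_mem_invtSubmodule_Astar n)).resolve_left (Φ.flag_ne_bot n)
    exact le_top.trans (htop ▸ hn)
  · exact h ▸ hmap

theorem eq_top_of_range_Estar_zero_le {U : Submodule K V} (hU : U ∈ Φ.A.invtSubmodule)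
    (h0 : LinearMap.range (Φ.Estar 0) ≤ U) : U = ⊤ := by
  have hflag : ∀ n, Φ.flag n ≤ U := by
    intro n
    induction n with
    | zero => exact (partialSups_zero _).trans_le h0
    | succ n ih => exact Φ.flag_succ_le hU ih
  exact top_le_iff.mp (Φ.flag_d_eq_top ▸ hflag Φ.d)

theorem range_E_eq_map (i : ℕ) :
    LinearMap.range (Φ.E i) = (LinearMap.range (Φ.Estar 0)).map (Φ.E i) := by
  refine le_antisymm ?_ LinearMap.map_le_range
  set U := (LinearMap.range (Φ.Estar 0)).map (Φ.E i)
  have hU : U.comap (Φ.E i) ∈ Φ.A.invtSubmodule := fun w hw => by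
    have hEA : Φ.E i (Φ.A w) = Φ.θ i • Φ.E i w := LinearMap.congr_fun (Φ.E_mul_A i) w
    rw [Submodule.mem_comap, Submodule.mem_comap, hEA]
    exact U.smul_mem _ hw
  have htop := Φ.eq_top_of_range_Estar_zero_le hU (Submodule.le_comap_map _ _)
  rw [LinearMap.range_eq_map, Submodule.map_le_iff_le_comap, htop]

theorem isPrincipal_range_E (i : ℕ) : (LinearMap.range (Φ.E i)).IsPrincipal := by
  rw [Φ.range_E_eq_map i]
  exact (Φ.isPrincipal_range_Estar 0).map (Φ.E i)

theorem finiteDimensional (Φ : ThinHessenbergSystem K V) : FiniteDimensional K V := by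
  have hfg : ∀ n, (Φ.flag n).FG := by
    intro n
    induction n with
    | zero =>
      exact (partialSups_zero fun i => LinearMap.range (Φ.Estar i)).symm ▸
        (Φ.isPrincipal_range_Estar 0).fg
    | succ n ih =>
      exact (partialSups_add_one (fun i => LinearMap.range (Φ.Estar i)) n).symm ▸
        ih.sup (Φ.isPrincipal_range_Estar (n + 1)).fg
  exact ⟨Φ.flag_d_eq_top ▸ hfg Φ.d⟩

theorem trace_E_zero_mul_Estar_zero_ne_zero {σ : K →+* K}
    {B : V →ₗ[K] V →ₛₗ[σ] K} (hB : ∀ u, B u u = 0 → u = 0)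
    (hE : B.IsSelfAdjoint (Φ.E 0)) (hEstar : B.IsSelfAdjoint (Φ.Estar 0)) :
    LinearMap.trace K V (Φ.E 0 * Φ.Estar 0) ≠ 0 := by
  have := Φ.finiteDimensional
  intro htr
  have hE0 : ∀ v ∈ LinearMap.range (Φ.Estar 0), Φ.E 0 v = 0 := fun v hv => hB _ <| by
    rw [sesq_apply_self_eq_mul_trace (Φ.isIdempotentElem_Estar 0) hEstar
      (Φ.isPrincipal_range_Estar 0) (Φ.isIdempotentElem_E 0) hE hv, htr, mul_zero]
  refine Φ.E_zero_ne_zero (LinearMap.range_eq_bot.mp ?_)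
  rw [Φ.range_E_eq_map 0]
  exact LinearMap.le_ker_iff_map.mp hE0

end ThinHessenbergSystem

theorem stmt14_general {K V : Type*} [Field K] [AddCommGroup V] [Module K V]
    {σ : K →+* K} {B : V →ₗ[K] V →ₛₗ[σ] K}
    (Φ : ThinHessenbergSystem K V) (hB : ∀ u, B u u = 0 → u = 0)
    (hE : ∀ i, B.IsSelfAdjoint (Φ.E i)) (hEstar : ∀ i, B.IsSelfAdjoint (Φ.Estar i))
    {u v : V} (hu : u ∈ LinearMap.range (Φ.E 0)) (hv : v ∈ LinearMap.range (Φ.Estar 0)) (i : ℕ) :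
    B (Φ.Estar i u) (Φ.Estar i u) = B u u * Φ.k i / Φ.ν ∧
      B (Φ.E i v) (Φ.E i v) = B v v * Φ.kstar i / Φ.ν := by
  have := Φ.finiteDimensional
  have hν : Φ.ν ≠ 0 :=
    inv_ne_zero (Φ.trace_E_zero_mul_Estar_zero_ne_zero hB (hE 0) (hEstar 0))
  constructor
  · rw [sesq_apply_self_eq_mul_trace (Φ.isIdempotentElem_E 0) (hE 0) (Φ.isPrincipal_range_E 0)
      (Φ.isIdempotentElem_Estar i) (hEstar i) hu, ThinHessenbergSystem.k, mul_div_assoc,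
      mul_div_cancel_left₀ _ hν]
  · rw [sesq_apply_self_eq_mul_trace (Φ.isIdempotentElem_Estar 0) (hEstar 0)
      (Φ.isPrincipal_range_Estar 0) (Φ.isIdempotentElem_E i) (hE i) hv,
      ThinHessenbergSystem.kstar, mul_div_assoc, mul_div_cancel_left₀ _ hν]

omit [DecidableEq X] in
theorem herm_eq_dotProduct_star (u v : X → ℂ) : herm u v = u ⬝ᵥ star v := rfl

omit [DecidableEq X] in
open scoped ComplexOrder in
theorem eq_zero_of_herm_self_eq_zero {u : X → ℂ} (hu : herm u u = 0) : u = 0 :=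
  dotProduct_self_star_eq_zero.mp hu

omit [DecidableEq X] in
theorem herm_mulVec {P : Matrix X X ℂ} (hP : P.IsHermitian) (u v : X → ℂ) :
    herm (P *ᵥ u) v = herm u (P *ᵥ v) := by
  rw [herm_eq_dotProduct_star, herm_eq_dotProduct_star, star_mulVec, hP.eq, dotProduct_comm,
    dotProduct_mulVec, dotProduct_comm]

/-- The restriction of `herm` to a subspace of `ℂ^X`, as a sesquilinear form. -/
def hermForm (W : Submodule ℂ (X → ℂ)) : W →ₗ[ℂ] W →ₗ⋆[ℂ] ℂ :=
  LinearMap.mk₂'ₛₗ (RingHom.id ℂ) (starRingEnd ℂ) (fun u v => herm (u : X → ℂ) v)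
    (fun u u' v => by simp [herm_eq_dotProduct_star])
    (fun c u v => by simp [herm_eq_dotProduct_star])
    (fun u v v' => by simp [herm_eq_dotProduct_star])
    (fun c u v => by simp [herm_eq_dotProduct_star])

namespace TSetup

variable (S : TSetup X)

theorem Estar_eq_diagonal (i : ℕ) :
    S.Estar i = diagonal fun y => if S.G.dist S.x y = i then 1 else 0 := by
  ext y z
  rw [diagonal_apply]
  rcases le_or_gt i S.D with hi | hi
  · rw [S.hEstar i hi, ite_and]
  · have := S.hDiamLe S.x y
    rw [S.hEstarzero i hi, if_neg (show S.G.dist S.x y ≠ i by lia), ite_self, Matrix.zero_apply]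

theorem Estar_mul_Estar (i j : ℕ) : S.Estar i * S.Estar j = if i = j then S.Estar i else 0 := by
  simp only [Estar_eq_diagonal, diagonal_mul_diagonal]
  ext y z
  split_ifs <;> simp only [diagonal_apply, Matrix.zero_apply] <;> grind

theorem sum_Estar : ∑ i ∈ Finset.range (S.D + 1), S.Estar i = 1 := by
  ext y z
  have hy : S.G.dist S.x y < S.D + 1 := Nat.lt_succ_of_le (S.hDiamLe S.x y)
  simp only [Estar_eq_diagonal, Matrix.sum_apply, diagonal_apply, one_apply]
  split_ifs
  · rw [Finset.sum_ite_eq, if_pos (Finset.mem_range.mpr hy)]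
  · exact Finset.sum_const_zero

theorem completeOrthogonalIdempotents_E :
    CompleteOrthogonalIdempotents fun i : Fin (S.D + 1) => S.E i where
  idem i := by
    rw [IsIdempotentElem, S.hEidem i i (Fin.is_le i) (Fin.is_le i), if_pos rfl]
  ortho i j h := by
    change S.E i * S.E j = 0
    rw [S.hEidem i j (Fin.is_le i) (Fin.is_le j), if_neg (Fin.val_ne_of_ne h)]
  complete := (Fin.sum_univ_eq_sum_range S.E _).trans S.hEsum

theorem completeOrthogonalIdempotents_Estar :
    CompleteOrthogonalIdempotents fun i : Fin (S.D + 1) => S.Estar i where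
  idem i := by rw [IsIdempotentElem, S.Estar_mul_Estar, if_pos rfl]
  ortho i j h := by
    change S.Estar i * S.Estar j = 0
    rw [S.Estar_mul_Estar, if_neg (Fin.val_ne_of_ne h)]
  complete := (Fin.sum_univ_eq_sum_range S.Estar _).trans S.sum_Estar

theorem isIdempotentElem_E (i : ℕ) : IsIdempotentElem (S.E i) := by
  rcases le_or_gt i S.D with hi | hi
  · rw [IsIdempotentElem, S.hEidem i i hi hi, if_pos rfl]
  · rw [S.hEzero i hi]
    exact .zero

theorem isIdempotentElem_Estar (i : ℕ) : IsIdempotentElem (S.Estar i) := by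
  rw [IsIdempotentElem, S.Estar_mul_Estar, if_pos rfl]

theorem isHermitian_E (i : ℕ) : (S.E i).IsHermitian := by
  rw [IsHermitian, conjTranspose, S.hEsymm]
  exact S.hEreal i

theorem isHermitian_Estar (i : ℕ) : (S.Estar i).IsHermitian := by
  rw [Estar_eq_diagonal]
  exact isHermitian_diagonal_of_self_adjoint _ <| funext fun y => by
    rw [Pi.star_apply, apply_ite star, star_one, star_zero]

theorem E_mul_A (i : ℕ) : S.E i * S.A = (S.θ i : ℂ) • S.E i := by
  rcases le_or_gt i S.D with hi | hi
  · rw [S.hAspec, Finset.mul_sum, Finset.sum_eq_single_of_mem i (Finset.mem_range_succ_iff.mpr hi)]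
    · rw [mul_smul_comm, (S.isIdempotentElem_E i).eq]
    · intro j hj hji
      rw [mul_smul_comm, S.hEidem i j hi (Finset.mem_range_succ_iff.mp hj), if_neg hji.symm,
        smul_zero]
  · simp [S.hEzero i hi]

theorem Astar_mul_Estar (i : ℕ) : S.Astar * S.Estar i = (S.θstar i : ℂ) • S.Estar i := by
  rcases le_or_gt i S.D with hi | hi
  · simp [S.hAstarspec, Finset.sum_mul, S.Estar_mul_Estar, Nat.lt_succ_of_le hi]
  · simp [S.hEstarzero i hi]

theorem Estar_mul_A_mul_Estar {i j : ℕ} (h : i + 1 < j) : S.Estar j * S.A * S.Estar i = 0 := by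
  ext y z
  simp only [Estar_eq_diagonal, mul_diagonal, diagonal_mul, S.hA, Matrix.zero_apply]
  have htri : S.G.Adj y z → S.G.dist S.x y ≤ S.G.dist S.x z + 1 := fun hyz =>
    SimpleGraph.dist_eq_one_iff_adj.mpr hyz.symm ▸ S.hGconn.dist_triangle
  grind

theorem A_mem_T : S.A ∈ S.T := Algebra.subset_adjoin (Set.mem_insert _ _)

theorem Astar_mem_T : S.Astar ∈ S.T := Algebra.subset_adjoin (Set.mem_insert_of_mem _ rfl)

theorem E_mem_T (i : ℕ) : S.E i ∈ S.T := by
  rcases le_or_gt i S.D with hi | hi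
  · have hθ : Function.Injective fun j : Fin (S.D + 1) => (S.θ j : ℂ) := fun j k h =>
      Fin.ext (S.hθinj j k (Fin.is_le j) (Fin.is_le k) (Complex.ofReal_injective h))
    have hmem := mem_adjoin_sum_smul S.completeOrthogonalIdempotents_E hθ ⟨i, Nat.lt_succ_of_le hi⟩
    rw [Fin.sum_univ_eq_sum_range (fun j => (S.θ j : ℂ) • S.E j), ← S.hAspec] at hmem
    exact Algebra.adjoin_le (Set.singleton_subset_iff.mpr S.A_mem_T) hmem
  · rw [S.hEzero i hi]
    exact zero_mem _

theorem Estar_mem_T (i : ℕ) : S.Estar i ∈ S.T := by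
  rcases le_or_gt i S.D with hi | hi
  · have hθ : Function.Injective fun j : Fin (S.D + 1) => (S.θstar j : ℂ) := fun j k h =>
      Fin.ext (S.hθstarinj j k (Fin.is_le j) (Fin.is_le k) (Complex.ofReal_injective h))
    have hmem :=
      mem_adjoin_sum_smul S.completeOrthogonalIdempotents_Estar hθ ⟨i, Nat.lt_succ_of_le hi⟩
    rw [Fin.sum_univ_eq_sum_range (fun j => (S.θstar j : ℂ) • S.Estar j), ← S.hAstarspec] at hmem
    exact Algebra.adjoin_le (Set.singleton_subset_iff.mpr S.Astar_mem_T) hmem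
  · rw [S.hEstarzero i hi]
    exact zero_mem _

theorem mulVec_mem_of_mem_T {U : Submodule ℂ (X → ℂ)} (hA : ∀ w ∈ U, S.A *ᵥ w ∈ U)
    (hAstar : ∀ w ∈ U, S.Astar *ᵥ w ∈ U) {B : Matrix X X ℂ} (hB : B ∈ S.T) :
    ∀ w ∈ U, B *ᵥ w ∈ U := by
  induction hB using Algebra.adjoin_induction with
  | mem B hB =>
    rcases hB with rfl | rfl
    exacts [hA, hAstar]
  | algebraMap c =>
    intro w hw
    rw [Algebra.algebraMap_eq_smul_one, smul_mulVec, one_mulVec]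
    exact U.smul_mem c hw
  | add B C _ _ hB hC =>
    intro w hw
    rw [add_mulVec]
    exact U.add_mem (hB w hw) (hC w hw)
  | mul B C _ _ hB hC =>
    intro w hw
    rw [← mulVec_mulVec]
    exact hB _ (hC w hw)

end TSetup

namespace TMod

variable {S : TSetup X} (M : TMod S)

theorem coe_actW_apply {B : Matrix X X ℂ} (hB : B ∈ S.T) (w : M.W) :
    (actW S M B w : X → ℂ) = B *ᵥ w := by
  rw [actW, dif_pos (show ∀ w ∈ M.W, B.mulVecLin w ∈ M.W from M.hWinv B hB)]
  rfl

theorem actW_mul {B C : Matrix X X ℂ} (hB : B ∈ S.T) (hC : C ∈ S.T) :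
    actW S M (B * C) = actW S M B * actW S M C := by
  ext w : 2
  simp only [Module.End.mul_apply, M.coe_actW_apply (mul_mem hB hC), M.coe_actW_apply hB,
    M.coe_actW_apply hC, mulVec_mulVec]

theorem actW_smul (c : ℂ) {B : Matrix X X ℂ} (hB : B ∈ S.T) :
    actW S M (c • B) = c • actW S M B := by
  ext w : 2
  simp only [LinearMap.smul_apply, Submodule.coe_smul, M.coe_actW_apply (S.T.smul_mem hB c),
    M.coe_actW_apply hB, smul_mulVec]

theorem isIdempotentElem_actW {P : Matrix X X ℂ} (hP : P ∈ S.T) (h : IsIdempotentElem P) :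
    IsIdempotentElem (actW S M P) := by
  rw [IsIdempotentElem, ← M.actW_mul hP hP, h.eq]

theorem isSelfAdjoint_actW {P : Matrix X X ℂ} (hP : P ∈ S.T) (h : P.IsHermitian) :
    (hermForm M.W).IsSelfAdjoint (actW S M P) := fun u v => by
  change herm _ _ = herm _ _
  rw [M.coe_actW_apply hP, M.coe_actW_apply hP, herm_mulVec h]

theorem map_range_actW {B : Matrix X X ℂ} (hB : B ∈ S.T) :
    (LinearMap.range (actW S M B)).map M.W.subtype = M.W.map B.mulVecLin := by
  have h : M.W.subtype ∘ₗ actW S M B = B.mulVecLin ∘ₗ M.W.subtype :=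
    LinearMap.ext (M.coe_actW_apply hB)
  rw [← LinearMap.range_comp, h, LinearMap.range_comp, Submodule.range_subtype]

theorem actW_ne_zero {B : Matrix X X ℂ} (hB : B ∈ S.T) (h : M.W.map B.mulVecLin ≠ ⊥) :
    actW S M B ≠ 0 := by
  contrapose! h
  rw [← M.map_range_actW hB, h, LinearMap.range_zero, Submodule.map_bot]

theorem isPrincipal_range_actW_Estar (i : ℕ) :
    (LinearMap.range (actW S M (S.Estar i))).IsPrincipal :=
  isPrincipal_of_finrank_map_subtype_le_one <|
    (M.map_range_actW (S.Estar_mem_T i)).symm ▸ M.hthin i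

theorem Estar_mulVec_eq_zero {i : ℕ} (hi : ¬(M.r ≤ i ∧ i ≤ M.r + M.d)) {w : X → ℂ}
    (hw : w ∈ M.W) : S.Estar i *ᵥ w = 0 := by
  have hbot : M.W.map (S.Estar i).mulVecLin = ⊥ := not_not.mp ((M.hr i).not.mpr hi)
  exact (Submodule.mem_bot ℂ).mp (hbot ▸ ⟨w, hw, rfl⟩)

theorem r_add_d_le_D : M.r + M.d ≤ S.D := by
  by_contra! h
  refine (M.hr (M.r + M.d)).mpr ⟨Nat.le_add_right _ _, le_rfl⟩ ?_
  rw [S.hEstarzero _ h, mulVecLin_zero, Submodule.map_zero]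

theorem sum_actW_Estar : ∑ n ∈ Finset.range (M.d + 1), actW S M (S.Estar (M.r + n)) = 1 := by
  ext w : 2
  have hD := M.r_add_d_le_D
  calc ((∑ n ∈ Finset.range (M.d + 1), actW S M (S.Estar (M.r + n))) w : X → ℂ)
      = ∑ n ∈ Finset.range (M.d + 1), S.Estar (M.r + n) *ᵥ (w : X → ℂ) := by
        simp only [LinearMap.sum_apply, AddSubmonoidClass.coe_finsetSum,
          M.coe_actW_apply (S.Estar_mem_T _)]
    _ = ∑ j ∈ Finset.Ico M.r (M.r + M.d + 1), S.Estar j *ᵥ (w : X → ℂ) := by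
        rw [Finset.sum_Ico_eq_sum_range, add_assoc, Nat.add_sub_cancel_left]
    _ = ∑ j ∈ Finset.range (S.D + 1), S.Estar j *ᵥ (w : X → ℂ) := by
        have hsub : Finset.Ico M.r (M.r + M.d + 1) ⊆ Finset.range (S.D + 1) :=
          fun j hj => Finset.mem_range.mpr ((Finset.mem_Ico.mp hj).2.trans_le (by lia))
        refine Finset.sum_subset hsub fun j _ hj => ?_
        exact M.Estar_mulVec_eq_zero (by simpa [Nat.lt_succ_iff] using hj) w.2
    _ = w := by rw [← sum_mulVec, S.sum_Estar, one_mulVec]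

theorem eq_bot_or_eq_top_of_mem_invtSubmodule {U : Submodule ℂ M.W}
    (hA : U ∈ Module.End.invtSubmodule (actW S M S.A))
    (hAstar : U ∈ Module.End.invtSubmodule (actW S M S.Astar)) :
    U = ⊥ ∨ U = ⊤ := by
  have himage : ∀ B ∈ S.T, U ∈ Module.End.invtSubmodule (actW S M B) →
      ∀ w ∈ U.map M.W.subtype, B *ᵥ w ∈ U.map M.W.subtype := by
    rintro B hB hU _ ⟨w, hw, rfl⟩
    exact ⟨actW S M B w, hU hw, M.coe_actW_apply hB w⟩
  have hT : ∀ B ∈ S.T, ∀ w ∈ U.map M.W.subtype, B *ᵥ w ∈ U.map M.W.subtype := fun _ hB =>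
    S.mulVec_mem_of_mem_T (himage _ S.A_mem_T hA) (himage _ S.Astar_mem_T hAstar) hB
  have hinj := Submodule.map_injective_of_injective M.W.injective_subtype
  refine (M.hWirr _ (Submodule.map_subtype_le _ _) hT).imp (fun h => hinj ?_) fun h => hinj ?_
  · rw [h, Submodule.map_bot]
  · rw [h, Submodule.map_subtype_top]

/-- The action of `T` on a thin irreducible module, with the idempotents indexed from the
endpoint `r` and the dual endpoint `t`. -/
def system : ThinHessenbergSystem ℂ M.W where
  A := actW S M S.A
  Astar := actW S M S.Astar
  E i := actW S M (S.E (M.t + i))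
  Estar i := actW S M (S.Estar (M.r + i))
  θ i := S.θ (M.t + i)
  θstar i := S.θstar (M.r + i)
  d := M.d
  isIdempotentElem_E _ := M.isIdempotentElem_actW (S.E_mem_T _) (S.isIdempotentElem_E _)
  isIdempotentElem_Estar _ :=
    M.isIdempotentElem_actW (S.Estar_mem_T _) (S.isIdempotentElem_Estar _)
  E_mul_A _ := by
    rw [← M.actW_mul (S.E_mem_T _) S.A_mem_T, S.E_mul_A, M.actW_smul _ (S.E_mem_T _)]
  Astar_mul_Estar _ := by
    rw [← M.actW_mul S.Astar_mem_T (S.Estar_mem_T _), S.Astar_mul_Estar,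
      M.actW_smul _ (S.Estar_mem_T _)]
  E_zero_ne_zero := M.actW_ne_zero (S.E_mem_T _) ((M.ht _).mpr ⟨le_rfl, by lia⟩)
  Estar_zero_ne_zero := M.actW_ne_zero (S.Estar_mem_T _) ((M.hr _).mpr ⟨le_rfl, by lia⟩)
  sum_Estar := M.sum_actW_Estar
  isPrincipal_range_Estar _ := M.isPrincipal_range_actW_Estar _
  Estar_mul_A_mul_Estar i j h := by
    have hij : M.r + i + 1 < M.r + j := by lia
    rw [← M.actW_mul (S.Estar_mem_T _) S.A_mem_T,
      ← M.actW_mul (mul_mem (S.Estar_mem_T _) S.A_mem_T) (S.Estar_mem_T _),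
      S.Estar_mul_A_mul_Estar hij]
    ext w : 2
    rw [M.coe_actW_apply (zero_mem _), zero_mulVec]
    rfl
  irreducible _ := M.eq_bot_or_eq_top_of_mem_invtSubmodule

theorem trW_mul {B C : Matrix X X ℂ} (hB : B ∈ S.T) (hC : C ∈ S.T) :
    trW S M (B * C) = LinearMap.trace ℂ M.W (actW S M B * actW S M C) := by
  rw [trW, M.actW_mul hB hC]

theorem nuW_eq : nuW S M = M.system.ν := by
  rw [nuW, M.trW_mul (S.E_mem_T _) (S.Estar_mem_T _)]
  rfl

theorem kW_eq (i : ℕ) : kW S M i = M.system.k i := by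
  rw [kW, M.nuW_eq, M.trW_mul (S.Estar_mem_T _) (S.E_mem_T _)]
  rfl

theorem kstarW_eq (i : ℕ) : kstarW S M i = M.system.kstar i := by
  rw [kstarW, M.nuW_eq, M.trW_mul (S.E_mem_T _) (S.Estar_mem_T _)]
  rfl

theorem herm_mulVec_self {P : Matrix X X ℂ} (hP : P ∈ S.T) (u : M.W) :
    herm (P *ᵥ (u : X → ℂ)) (P *ᵥ (u : X → ℂ)) =
      hermForm M.W (actW S M P u) (actW S M P u) := by
  rw [← M.coe_actW_apply hP]
  rfl

end TMod

/-- For nonzero `u ∈ E_t W` and nonzero `v ∈ E*_r W` and `0 ≤ i ≤ d`: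
`‖E*_{r+i} u‖² = ‖u‖² k_i(W)/ν(W)` and `‖E_{t+i} v‖² = ‖v‖² k*_i(W)/ν(W)`. -/
theorem stmt14 (S : TSetup X) (M : TMod S) (hd : 0 < M.d) :
    ∀ u ∈ M.W.map (S.E M.t).mulVecLin, u ≠ 0 →
    ∀ v ∈ M.W.map (S.Estar M.r).mulVecLin, v ≠ 0 →
    ∀ i ≤ M.d,
      herm (S.Estar (M.r + i) *ᵥ u) (S.Estar (M.r + i) *ᵥ u) =
        herm u u * kW S M i / nuW S M ∧
      herm (S.E (M.t + i) *ᵥ v) (S.E (M.t + i) *ᵥ v) =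
        herm v v * kstarW S M i / nuW S M := by
  intro u hu _ v hv _ i _
  rw [← M.map_range_actW (S.E_mem_T _)] at hu
  rw [← M.map_range_actW (S.Estar_mem_T _)] at hv
  obtain ⟨u, hu, rfl⟩ := hu
  obtain ⟨v, hv, rfl⟩ := hv
  rw [M.nuW_eq, M.kW_eq, M.kstarW_eq]
  simp only [Submodule.subtype_apply, M.herm_mulVec_self (S.E_mem_T _),
    M.herm_mulVec_self (S.Estar_mem_T _)]
  exact stmt14_general M.system (fun u h => Subtype.ext (eq_zero_of_herm_self_eq_zero h))
    (fun _ => M.isSelfAdjoint_actW (S.E_mem_T _) (S.isHermitian_E _))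
    (fun _ => M.isSelfAdjoint_actW (S.Estar_mem_T _) (S.isHermitian_Estar _)) hu hv i
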